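/- arXiv:1310.7137 — 2 statements merged into one kernel-verified Lean document; each statement's English description precedes it below -/
import Mathlib

section
/- Let (A, Σ, δ) be a finite automaton whose alphabet Σ has at least two elements and which contains a cycle with exit (external or internal). Then there exists a family ρ = (ρ_x)_{x∈A} of permutations of Σ such that the enriched Mealy automaton (A, Σ, δ, ρ) is invertible and the group it generates is infinite. -/
/-!
Write `δ_i` for the action of the letter `i` on states, and let `a` be any letter. There are two
cases, according to whether the given cycle contains a state that is periodic under `δ_a`.

*No state of the cycle is `δ_a`-periodic* (`infinite_of_nonperiodic_cycle`). Let the cycle state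
`x_k`, with label `i_k`, exchange `a` and `i_k`, and let all other states act trivially. Reading
`a, a, …` every state ends among the `δ_a`-periodic states, which fix `a`; so every generator, and
hence every product of generators, preserves the words that are eventually constant equal to `a`
(`tail_mealyMap`). But a cycle state sends the infinite periodic word read along the cycle to
`a a a …`, and this periodic word is not eventually `a`: otherwise the cycle would contain
`δ_a`-periodic states. In a finite group the inverse of that generator would be one of its
powers, a contradiction.

*Some state of the cycle is `δ_a`-periodic.* Because of the exit, some `δ_a`-periodic state `x₀`
and some letter `b` satisfy `δ_b x₀ ≠ δ_a x₀`. Let `E` be the set of states reachable from `x₀`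
through the letters `a`, `b`. Every state of `E` has an `a`- or `b`-predecessor in `E`. Either
`δ_a` identifies two states `x ≠ z` of `E`, or it permutes `E` and there are `x ≠ z` in `E` with
`δ_a x = δ_b z` (`exists_merging_pair`). Let `z` exchange `a` and `b`, and let all other states act
trivially. In both situations `a v` and `b v` lie in one orbit for every word `v`: two generators
send a common word to `a v` and `b v`, respectively send `a v` and `b v` to a common word. Together
with the existence of predecessors this makes all words over `{a, b}` of a given length lie in one
orbit (`eqvGen_words`), so orbits are arbitrarily large and the group is infinite
(`infinite_of_toggle`).
-/

/-- Extended production function of a Mealy automaton: `mealyMap δ ρ x` is the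
action of the state `x` on finite words over the alphabet. -/
def mealyMap {A S : Type*} (δ : S → A → A) (ρ : A → S → S) : A → List S → List S
  | _, [] => []
  | x, i :: s => ρ x i :: mealyMap δ ρ (δ i x) s

/-- The semigroup generated by a Mealy automaton: the subsemigroup of maps
`Σ* → Σ*` (under composition) generated by the production functions. -/
def mealySemigroup {A S : Type*} (δ : S → A → A) (ρ : A → S → S) :
    Subsemigroup (Function.End (List S)) :=
  Subsemigroup.closure (Set.range fun x => (mealyMap δ ρ x : Function.End (List S)))

/-- The group generated by an invertible Mealy automaton: the subgroup of
permutations of `Σ*` generated by the production functions. -/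
def mealyGroup {A S : Type*} (δ : S → A → A) (ρ : A → S → S) :
    Subgroup (Equiv.Perm (List S)) :=
  Subgroup.closure {f : Equiv.Perm (List S) | ∃ x : A, ⇑f = mealyMap δ ρ x}

/-- A cycle in the automaton `(A, Σ, δ)`: pairwise distinct states
`states 0, …, states (n-1)` with transitions `states k —labels k→ states (k+1 mod n)`. -/
structure MealyCycle {A S : Type*} (δ : S → A → A) where
  n : ℕ
  npos : 0 < n
  states : Fin n → A
  labels : Fin n → S
  inj : Function.Injective states
  step : ∀ k : Fin n, δ (labels k) (states k) = states ⟨(k + 1) % n, Nat.mod_lt _ npos⟩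

/-- The cycle has an external exit. -/
def HasExternalExit {A S : Type*} {δ : S → A → A} (C : MealyCycle δ) : Prop :=
  ∃ (k : Fin C.n) (i : S), δ i (C.states k) ∉ Set.range C.states

/-- The cycle has an internal exit. -/
def HasInternalExit {A S : Type*} {δ : S → A → A} (C : MealyCycle δ) : Prop :=
  ∃ (k : Fin C.n) (i : S), δ i (C.states k) ∈ Set.range C.states ∧
    δ i (C.states k) ≠ δ (C.labels k) (C.states k)

/-- `v` is reachable from `u` in the automaton `(A, Σ, δ)`. -/
def Reachable {A S : Type*} (δ : S → A → A) (u v : A) : Prop :=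
  ∃ s : List S, s.foldl (fun a i => δ i a) u = v

/-- Action of a word `s ∈ Σ*` on states of powers of the automaton (words over `A`),
via the production functions of the dual automaton: `dualAct δ ρ s = δ_s`. -/
def dualAct {A S : Type*} (δ : S → A → A) (ρ : A → S → S) (s : List S) (u : List A) : List A :=
  s.foldl (fun w i => mealyMap ρ δ i w) u

/-- Two states of a power of a reversible Mealy automaton lie in the same
connected component iff some `δ_s` maps one to the other. -/
def sameComp {A S : Type*} (δ : S → A → A) (ρ : A → S → S) (u w : List A) : Prop :=
  ∃ s : List S, dualAct δ ρ s u = w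

section MealyBasics

open Function

variable {A S : Type*} (δ : S → A → A)

theorem mealyMap_injective (ρ : A → Equiv.Perm S) (x : A) :
    Injective (mealyMap δ (fun q => ⇑(ρ q)) x) := by
  intro u
  induction u generalizing x with
  | nil => intro v h; cases v <;> simp_all [mealyMap]
  | cons i s ih =>
    intro v h
    cases v with
    | nil => simp [mealyMap] at h
    | cons j t =>
      simp only [mealyMap, List.cons.injEq, EmbeddingLike.apply_eq_iff_eq] at h
      obtain ⟨rfl, h⟩ := h
      rw [ih _ h]

theorem mealyMap_surjective (ρ : A → Equiv.Perm S) (x : A) :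
    Surjective (mealyMap δ (fun q => ⇑(ρ q)) x) := by
  intro v
  induction v generalizing x with
  | nil => exact ⟨[], rfl⟩
  | cons j t ih =>
    obtain ⟨s, hs⟩ := ih (δ ((ρ x).symm j) x)
    exact ⟨(ρ x).symm j :: s, by simp [mealyMap, hs]⟩

/-- The production function of the state `x`, as a permutation of the set of words. -/
noncomputable def mealyPerm (ρ : A → Equiv.Perm S) (x : A) : Equiv.Perm (List S) :=
  Equiv.ofBijective _ ⟨mealyMap_injective δ ρ x, mealyMap_surjective δ ρ x⟩

theorem mealyPerm_apply (ρ : A → Equiv.Perm S) (x : A) (l : List S) :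
    mealyPerm δ ρ x l = mealyMap δ (fun q => ⇑(ρ q)) x l := rfl

theorem mealyPerm_mem (ρ : A → Equiv.Perm S) (x : A) :
    mealyPerm δ ρ x ∈ mealyGroup δ (fun q => ⇑(ρ q)) :=
  Subgroup.subset_closure ⟨x, rfl⟩

/-! ### Orbits and a transitivity criterion -/

/-- `w` is the image of `u` under the production function of a state in `E`. -/
def ActsTo (ρ : A → Equiv.Perm S) (E : Set A) (u w : List S) : Prop :=
  ∃ q ∈ E, mealyMap δ (fun q => ⇑(ρ q)) q u = w

theorem exists_mem_mealyGroup_of_eqvGen (ρ : A → Equiv.Perm S) (E : Set A) {u w : List S}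
    (h : Relation.EqvGen (ActsTo δ ρ E) u w) :
    ∃ g ∈ mealyGroup δ (fun q => ⇑(ρ q)), g u = w := by
  induction h with
  | rel u w h =>
    obtain ⟨q, -, hq⟩ := h
    exact ⟨mealyPerm δ ρ q, mealyPerm_mem δ ρ q, hq⟩
  | refl u => exact ⟨1, one_mem _, rfl⟩
  | symm u w _ ih =>
    obtain ⟨g, hg, rfl⟩ := ih
    exact ⟨g⁻¹, inv_mem hg, by simp⟩
  | trans u v w _ _ ih₁ ih₂ =>
    obtain ⟨g, hg, rfl⟩ := ih₁
    obtain ⟨h, hh, rfl⟩ := ih₂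
    exact ⟨h * g, mul_mem hh hg, rfl⟩

/-- If the first letter `a` may be exchanged with `b` within orbits, and every state of `E` has an
`a`- or `b`-predecessor in `E`, then all words over `{a, b}` of the same length are in one orbit:
the action of `q` on a suffix is realized by a predecessor of `q`, and the first letter is
repaired by the exchange. -/
theorem eqvGen_words (ρ : A → Equiv.Perm S) (E : Set A) {a b : S}
    (hρ : ∀ q s, (s = a ∨ s = b) → (ρ q s = a ∨ ρ q s = b))
    (hpred : ∀ q ∈ E, ∃ p ∈ E, ∃ s, (s = a ∨ s = b) ∧ δ s p = q)
    (htog : ∀ v, Relation.EqvGen (ActsTo δ ρ E) (a :: v) (b :: v))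
    (u w : List S) (hlen : u.length = w.length)
    (hu : ∀ s ∈ u, s = a ∨ s = b) (hw : ∀ s ∈ w, s = a ∨ s = b) :
    Relation.EqvGen (ActsTo δ ρ E) u w := by
  have htog' : ∀ s v, (s = a ∨ s = b) →
      Relation.EqvGen (ActsTo δ ρ E) (a :: v) (s :: v) := by
    rintro s v (rfl | rfl)
    · exact .refl _
    · exact htog v
  have hlift : ∀ u w, Relation.EqvGen (ActsTo δ ρ E) u w →
      Relation.EqvGen (ActsTo δ ρ E) (a :: u) (a :: w) := by
    intro u w h
    induction h with
    | rel u w h =>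
      obtain ⟨q, hq, rfl⟩ := h
      obtain ⟨p, hp, s, hs, rfl⟩ := hpred q hq
      refine (htog' s u hs).trans _ _ _ (.trans _ _ _ (.rel _ _ ⟨p, hp, rfl⟩) ?_)
      exact (htog' _ _ (hρ p s hs)).symm
    | refl u => exact .refl _
    | symm u w _ ih => exact ih.symm
    | trans u v w _ _ ih₁ ih₂ => exact ih₁.trans _ _ _ ih₂
  induction u generalizing w with
  | nil =>
    cases w with
    | nil => exact .refl _
    | cons => simp at hlen
  | cons s u ih =>
    cases w with
    | nil => simp at hlen
    | cons t w =>
      simp only [List.mem_cons, forall_eq_or_imp] at hu hw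
      have h := hlift _ _ (ih w (by simpa using hlen) hu.2 hw.2)
      exact (htog' s u hu.1).symm.trans _ _ _ (h.trans _ _ _ (htog' t w hw.1))

theorem infinite_of_toggle (ρ : A → Equiv.Perm S) (E : Set A) {a b : S} (hab : a ≠ b)
    (hρ : ∀ q s, (s = a ∨ s = b) → (ρ q s = a ∨ ρ q s = b))
    (hpred : ∀ q ∈ E, ∃ p ∈ E, ∃ s, (s = a ∨ s = b) ∧ δ s p = q)
    (htog : ∀ v, Relation.EqvGen (ActsTo δ ρ E) (a :: v) (b :: v)) :
    Infinite ↥(mealyGroup δ (fun q => ⇑(ρ q))) := by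
  by_contra hfin
  rw [not_infinite_iff_finite] at hfin
  -- `word k` has the letter `b` at position `k` only; these words all lie in the orbit of `word 0`.
  let n := Nat.card ↥(mealyGroup δ (fun q => ⇑(ρ q))) + 1
  let word : Fin n → List S := fun k => List.ofFn fun j : Fin n => if j = k then b else a
  have hword : Injective word := by
    intro k k' h
    have := congrFun (List.ofFn_injective h) k
    by_contra hne
    simp [hne, hab.symm] at this
  have hmem : ∀ k, ∀ s ∈ word k, s = a ∨ s = b := by
    intro k s hs
    obtain ⟨j, rfl⟩ := (List.mem_ofFn' _ _).1 hs
    by_cases h : j = k <;> simp [h]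
  have hex : ∀ k, ∃ g : ↥(mealyGroup δ (fun q => ⇑(ρ q))), g.1 (word 0) = word k := by
    intro k
    obtain ⟨g, hg, h⟩ := exists_mem_mealyGroup_of_eqvGen δ ρ E
      (eqvGen_words δ ρ E hρ hpred htog (word 0) (word k) (by simp [word]) (hmem 0) (hmem k))
    exact ⟨⟨g, hg⟩, h⟩
  choose g hg using hex
  have hinj : Injective g := fun k k' h => hword (by rw [← hg k, ← hg k', h])
  have := Nat.card_le_card_of_injective g hinj
  simp [n] at this

/-! ### A periodic state where two letters differ -/

/-- In a finite set `E` closed under `f` and `g`, with `f ≠ g` on `E`, two distinct points are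
merged by `f`, or by `f` and `g`. -/
theorem exists_merging_pair [Finite A] (f g : A → A) (E : Set A) (hf : Set.MapsTo f E E)
    (hg : Set.MapsTo g E E) {x₀ : A} (hx₀ : x₀ ∈ E) (hne : g x₀ ≠ f x₀) :
    ∃ x ∈ E, ∃ z ∈ E, x ≠ z ∧ (f x = f z ∨ f x = g z) := by
  by_cases hinj : Set.InjOn f E
  · have hsurj : Set.SurjOn f E E :=
      (((Set.toFinite E).injOn_iff_bijOn_of_mapsTo hf).1 hinj).surjOn
    obtain ⟨x, hx, hxz⟩ := hsurj (hg hx₀)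
    refine ⟨x, hx, x₀, hx₀, ?_, Or.inr hxz⟩
    rintro rfl
    exact hne hxz.symm
  · simp only [Set.InjOn, not_forall] at hinj
    obtain ⟨x, hx, z, hz, h, hxz⟩ := hinj
    exact ⟨x, hx, z, hz, hxz, Or.inl h⟩

/-- With `x`, `z` a merging pair, the permutation at `z` exchanges `a` and `b` and all the others are
trivial. -/
theorem exists_infinite_of_periodic [Finite A] {a b : S} {x₀ : A}
    (hper : x₀ ∈ periodicPts (δ a)) (hne : δ b x₀ ≠ δ a x₀) :
    ∃ ρ : A → Equiv.Perm S, Infinite ↥(mealyGroup δ (fun q => ⇑(ρ q))) := by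
  classical
  have hab : a ≠ b := by rintro rfl; exact hne rfl
  let step : A → A → Prop := fun p q => ∃ s, (s = a ∨ s = b) ∧ δ s p = q
  let E : Set A := {q | Relation.ReflTransGen step x₀ q}
  have hE : ∀ s, (s = a ∨ s = b) → Set.MapsTo (δ s) E E :=
    fun s hs q hq => Relation.ReflTransGen.tail hq ⟨s, hs, rfl⟩
  have hx₀ : x₀ ∈ E := Relation.ReflTransGen.refl
  have hpred : ∀ q ∈ E, ∃ p ∈ E, ∃ s, (s = a ∨ s = b) ∧ δ s p = q := by
    intro q hq
    rcases Relation.ReflTransGen.cases_tail hq with rfl | ⟨p, hp, hs⟩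
    · -- the starting state has a predecessor on its own `δ a`-cycle
      obtain ⟨n, hn, h⟩ := hper
      obtain ⟨m, rfl⟩ := Nat.exists_eq_succ_of_ne_zero hn.ne'
      refine ⟨(δ a)^[m] q, (hE a (Or.inl rfl)).iterate m hx₀, a, Or.inl rfl, ?_⟩
      rw [← iterate_succ_apply' (δ a)]
      exact h
    · exact ⟨p, hp, hs⟩
  obtain ⟨x, hx, z, hz, hxz, hmerge⟩ := exists_merging_pair (δ a) (δ b) E
    (hE a (Or.inl rfl)) (hE b (Or.inr rfl)) hx₀ hne
  let ρ : A → Equiv.Perm S := fun q => if q = z then Equiv.swap a b else 1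
  refine ⟨ρ, infinite_of_toggle δ ρ E hab ?_ hpred ?_⟩
  · intro q s hs
    by_cases hq : q = z <;> rcases hs with rfl | rfl <;> simp [ρ, hq]
  · intro v
    rcases hmerge with h | h
    · -- a common preimage `a :: w` of `a :: v` (under `x`) and of `b :: v` (under `z`)
      obtain ⟨w, hw⟩ := mealyMap_surjective δ ρ (δ a x) v
      have h₁ : ActsTo δ ρ E (a :: w) (a :: v) := ⟨x, hx, by simp [mealyMap, hw, ρ, hxz]⟩
      have h₂ : ActsTo δ ρ E (a :: w) (b :: v) :=
        ⟨z, hz, by rw [mealyMap, ← h, hw]; simp [ρ]⟩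
      exact ((Relation.EqvGen.rel _ _ h₁).symm).trans _ _ _ (.rel _ _ h₂)
    · -- a common image of `a :: v` (under `x`) and of `b :: v` (under `z`)
      have h₁ : ActsTo δ ρ E (a :: v) (a :: mealyMap δ (fun q => ⇑(ρ q)) (δ a x) v) :=
        ⟨x, hx, by simp [mealyMap, ρ, hxz]⟩
      have h₂ : ActsTo δ ρ E (b :: v) (a :: mealyMap δ (fun q => ⇑(ρ q)) (δ a x) v) :=
        ⟨z, hz, by rw [mealyMap, ← h]; simp [ρ]⟩
      exact (Relation.EqvGen.rel _ _ h₁).trans _ _ _ (Relation.EqvGen.rel _ _ h₂).symm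

/-! ### Eventually constant words -/

/-- All letters of `l` from position `N` on are equal to `a`. -/
def TailEq (a : S) (N : ℕ) (l : List S) : Prop := ∀ s ∈ l.drop N, s = a

theorem exists_iterate_mem_periodicPts [Finite A] (f : A → A) :
    ∃ m, ∀ x, f^[m] x ∈ periodicPts f := by
  obtain ⟨m, n, hne, h⟩ := Finite.exists_ne_map_eq_of_infinite fun k : ℕ => f^[k]
  wlog hmn : m < n generalizing m n
  · exact this n m hne.symm h.symm (by omega)
  refine ⟨m, fun x => ⟨n - m, by omega, ?_⟩⟩
  change f^[n - m] (f^[m] x) = f^[m] x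
  rw [← iterate_add_apply, Nat.sub_add_cancel hmn.le]
  exact (congrFun h x).symm

theorem mealyMap_of_periodic (ρ : A → S → S) {a : S}
    (hfix : ∀ q ∈ periodicPts (δ a), ρ q a = a) {q : A} (hq : q ∈ periodicPts (δ a))
    (l : List S) (hl : ∀ s ∈ l, s = a) : ∀ s ∈ mealyMap δ ρ q l, s = a := by
  induction l generalizing q with
  | nil => simp [mealyMap]
  | cons i l ih =>
    simp only [List.mem_cons, forall_eq_or_imp] at hl
    obtain ⟨rfl, hl⟩ := hl
    have hq' : δ i q ∈ periodicPts (δ i) := (bijOn_periodicPts (δ i)).mapsTo hq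
    simpa [mealyMap, hfix q hq] using ih hq' hl

theorem tailEq_mealyMap_zero (ρ : A → S → S) {a : S}
    (hfix : ∀ q ∈ periodicPts (δ a), ρ q a = a) (m : ℕ) {q : A}
    (hq : (δ a)^[m] q ∈ periodicPts (δ a)) (l : List S) (hl : ∀ s ∈ l, s = a) :
    TailEq a m (mealyMap δ ρ q l) := by
  induction m generalizing q l with
  | zero => simpa [TailEq] using mealyMap_of_periodic δ ρ hfix hq l hl
  | succ m ih =>
    cases l with
    | nil => simp [TailEq, mealyMap]
    | cons i l =>
      simp only [List.mem_cons, forall_eq_or_imp] at hl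
      obtain ⟨rfl, hl⟩ := hl
      simpa [TailEq, mealyMap] using ih (by simpa using hq) l hl

/-- If the `δ a`-periodic states fix `a`, then production functions preserve the words that are
eventually equal to `a`: `m` further letters `a` bring every state to a periodic one. -/
theorem tail_mealyMap (ρ : A → S → S) {a : S}
    (hfix : ∀ q ∈ periodicPts (δ a), ρ q a = a) {m : ℕ}
    (hm : ∀ q, (δ a)^[m] q ∈ periodicPts (δ a)) (N : ℕ) (q : A) (l : List S)
    (hl : TailEq a N l) : TailEq a (N + m) (mealyMap δ ρ q l) := by
  induction N generalizing q l with
  | zero => simpa using tailEq_mealyMap_zero δ ρ hfix m (hm q) l (by simpa [TailEq] using hl)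
  | succ N ih =>
    cases l with
    | nil => simp [TailEq, mealyMap]
    | cons i l =>
      have := ih (δ i q) l (by simpa [TailEq] using hl)
      simpa [TailEq, mealyMap, Nat.add_right_comm] using this

end MealyBasics

/-! ### Cycles -/

section Cycles

open Function

variable {A S : Type*} {δ : S → A → A} (C : MealyCycle δ)

/-- The successor of an index along a cycle. -/
def cycleNext (k : Fin C.n) : Fin C.n := ⟨(k + 1) % C.n, Nat.mod_lt _ C.npos⟩

theorem cycleNext_iterate_val (j : Fin C.n) (i : ℕ) :
    (((cycleNext C)^[i] j : Fin C.n) : ℕ) = (j + i) % C.n := by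
  induction i with
  | zero => simp [Nat.mod_eq_of_lt j.2]
  | succ i ih =>
    rw [iterate_succ_apply']
    change ((((cycleNext C)^[i] j : Fin C.n) : ℕ) + 1) % C.n = _
    rw [ih]
    simp [Nat.add_assoc]

theorem exists_cycleNext_iterate (j k : Fin C.n) : ∃ i, (cycleNext C)^[i] j = k := by
  refine ⟨C.n - j + k, Fin.ext ?_⟩
  have hj := j.2
  rw [cycleNext_iterate_val, show (j : ℕ) + (C.n - j + k) = k + C.n by omega]
  simp [Nat.mod_eq_of_lt k.2]

/-- The word of length `m` read along the cycle from the index `j`. -/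
def cycleWord : Fin C.n → ℕ → List S
  | _, 0 => []
  | j, m + 1 => C.labels j :: cycleWord (cycleNext C j) m

theorem drop_cycleWord (j : Fin C.n) (N m : ℕ) :
    (cycleWord C j (N + m)).drop N = cycleWord C ((cycleNext C)^[N] j) m := by
  induction N generalizing j with
  | zero => simp
  | succ N ih => rw [Nat.add_right_comm, cycleWord, List.drop_succ_cons, ih, iterate_succ_apply]

/-- If the word read along the cycle is constant equal to `a`, the cycle follows `δ a`. -/
theorem iterate_states_of_cycleWord {a : S} (m : ℕ) (j : Fin C.n)
    (h : ∀ s ∈ cycleWord C j m, s = a) :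
    (δ a)^[m] (C.states j) = C.states ((cycleNext C)^[m] j) := by
  induction m generalizing j with
  | zero => rfl
  | succ m ih =>
    simp only [cycleWord, List.mem_cons, forall_eq_or_imp] at h
    rw [iterate_succ_apply, iterate_succ_apply, ← ih _ h.2, ← h.1, C.step j, cycleNext]

theorem mealyMap_cycleWord {ρ : A → S → S} {a : S}
    (hρ : ∀ j, ρ (C.states j) (C.labels j) = a) (m : ℕ) (j : Fin C.n) :
    mealyMap δ ρ (C.states j) (cycleWord C j m) = List.replicate m a := by
  induction m generalizing j with
  | zero => rfl
  | succ m ih =>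
    rw [cycleWord, mealyMap, C.step j, hρ j, List.replicate_succ, ← ih (cycleNext C j), cycleNext]

/-- The permutation at a cycle state exchanges `a` with the label of that state, so the word read along
the cycle is sent to a power of `a`; all other permutations are trivial. -/
theorem infinite_of_nonperiodic_cycle [Finite A] (a : S)
    (hnp : ∀ j, C.states j ∉ periodicPts (δ a)) :
    ∃ ρ : A → Equiv.Perm S, Infinite ↥(mealyGroup δ (fun q => ⇑(ρ q))) := by
  classical
  let ρ : A → Equiv.Perm S := fun q =>
    if h : ∃ j, C.states j = q then Equiv.swap a (C.labels h.choose) else 1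
  have hcycle : ∀ j, ρ (C.states j) (C.labels j) = a := by
    intro j
    have h : ∃ j', C.states j' = C.states j := ⟨j, rfl⟩
    simp only [ρ, dif_pos h, C.inj h.choose_spec, Equiv.swap_apply_right]
  have hfix : ∀ q ∈ periodicPts (δ a), ρ q a = a := by
    intro q hq
    have h : ¬ ∃ j, C.states j = q := by
      rintro ⟨j, rfl⟩
      exact hnp j hq
    simp [ρ, dif_neg h]
  refine ⟨ρ, ?_⟩
  by_contra hfin
  rw [not_infinite_iff_finite] at hfin
  obtain ⟨m, hm⟩ := exists_iterate_mem_periodicPts (δ a)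
  let j₀ : Fin C.n := ⟨0, C.npos⟩
  let g : ↥(mealyGroup δ (fun q => ⇑(ρ q))) :=
    ⟨mealyPerm δ ρ (C.states j₀), mealyPerm_mem δ ρ _⟩
  have hpow : ∀ k : ℕ, ∀ r, TailEq a (k * m) ((g ^ k).1 (List.replicate r a)) := by
    intro k
    induction k with
    | zero =>
      intro r s hs
      simpa using List.eq_of_mem_replicate (by simpa using hs)
    | succ k ih =>
      intro r
      have := tail_mealyMap δ (fun q => ⇑(ρ q)) hfix hm (k * m) (C.states j₀) _ (ih r)
      rw [Nat.succ_mul, pow_succ']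
      exact this
  -- in a finite group the inverse of `g` is a power of `g`
  obtain ⟨k, hk⟩ : ∃ k : ℕ, g ^ k = g⁻¹ := by
    have : g⁻¹ ∈ Submonoid.powers g :=
      mem_powers_iff_mem_zpowers.2 (inv_mem (Subgroup.mem_zpowers g))
    exact this
  have hinv : ∀ r, (g ^ k).1 (List.replicate r a) = cycleWord C j₀ r := by
    intro r
    rw [hk, ← mealyMap_cycleWord C (ρ := fun q => ⇑(ρ q)) hcycle r j₀]
    exact Equiv.symm_apply_apply (mealyPerm δ ρ (C.states j₀)) _
  -- hence the cycle word is eventually `a`, and `δ a` has a periodic point on the cycle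
  have htail := hpow k (k * m + m)
  rw [hinv, TailEq, drop_cycleWord] at htail
  have h := hm (C.states ((cycleNext C)^[k * m] j₀))
  rw [iterate_states_of_cycleWord C m _ htail] at h
  exact hnp _ h

/-- If the cycle has an exit and meets the `δ a`-periodic states, then some letter acts differently
from `a` on a `δ a`-periodic state: otherwise the cycle would be closed under all letters. -/
theorem exists_periodic_ne (hC : HasExternalExit C ∨ HasInternalExit C) {a : S} {j : Fin C.n}
    (hj : C.states j ∈ periodicPts (δ a)) :
    ∃ b, ∃ x ∈ periodicPts (δ a), δ b x ≠ δ a x := by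
  by_contra! hcon
  have hiter : ∀ i, C.states ((cycleNext C)^[i] j) ∈ periodicPts (δ a) := by
    intro i
    induction i with
    | zero => exact hj
    | succ i ih =>
      have h := (bijOn_periodicPts (δ a)).mapsTo ih
      rw [← hcon (C.labels ((cycleNext C)^[i] j)) _ ih, C.step] at h
      rw [iterate_succ_apply']
      exact h
  have hall : ∀ k, C.states k ∈ periodicPts (δ a) := by
    intro k
    obtain ⟨i, rfl⟩ := exists_cycleNext_iterate C j k
    exact hiter i
  rcases hC with ⟨k, i, h⟩ | ⟨k, i, -, h⟩
  · apply h
    rw [hcon i _ (hall k), ← hcon (C.labels k) _ (hall k), C.step]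
    exact ⟨_, rfl⟩
  · exact h (by rw [hcon i _ (hall k), hcon (C.labels k) _ (hall k)])

end Cycles

/-- Theorem 4, main result: any finite automaton over an alphabet with at
least two letters that has a cycle with exit (external or internal) can be enriched with
invertible production functions so that the generated group is infinite. -/
theorem cycle_with_exit_enrich_infinite_group
    {A S : Type*} [Fintype A] [Fintype S] [Nonempty A]
    (hS : 1 < Fintype.card S) (δ : S → A → A)
    (C : MealyCycle δ) (hC : HasExternalExit C ∨ HasInternalExit C) :
    ∃ ρ : A → Equiv.Perm S, Infinite ↥(mealyGroup δ (fun a => ⇑(ρ a))) := by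
  -- any letter can play the role of `a`
  let a : S := C.labels ⟨0, C.npos⟩
  by_cases h : ∃ j, C.states j ∈ Function.periodicPts (δ a)
  · obtain ⟨j, hj⟩ := h
    obtain ⟨b, x, hx, hne⟩ := exists_periodic_ne C hC hj
    exact exists_infinite_of_periodic δ hx hne
  · exact infinite_of_nonperiodic_cycle C a (not_exists.1 h)
end

section
/- (Pumping Lemma) Let M be a reversible Mealy automaton with exactly two states x and y. Then the semigroup generated by M is infinite if and only if for every integer N there exists a word u ∈ {x, y}* of length at least N such that the states ux and uy belong to the same connected component of the power automaton M^{|u|+1}. -/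
/-! ### Powers, the dual automaton and finiteness -/

section Basic

variable {A S : Type*} (δ : S → A → A) (ρ : A → S → S)

theorem length_mealyMap (x : A) (s : List S) : (mealyMap δ ρ x s).length = s.length := by
  induction s generalizing x with
  | nil => rfl
  | cons i s ih => simp [mealyMap, ih]

theorem length_dualAct (s : List S) (u : List A) : (dualAct δ ρ s u).length = u.length := by
  induction s generalizing u with
  | nil => rfl
  | cons i s ih =>
    change (dualAct δ ρ s (mealyMap ρ δ i u)).length = _
    rw [ih, length_mealyMap]

theorem dualAct_append (s t : List S) (u : List A) :
    dualAct δ ρ (s ++ t) u = dualAct δ ρ t (dualAct δ ρ s u) := by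
  simp [dualAct]

theorem dualAct_nil (s : List S) : dualAct δ ρ s [] = [] :=
  List.length_eq_zero_iff.1 (length_dualAct δ ρ s [])

/-- Reading the first letter `i` in the power automaton: the output is `ρ_u(i)` and the new state
is `δ_i(u)`. -/
theorem dualAct_swap_cons (u : List A) (i : S) (s : List S) :
    dualAct ρ δ u (i :: s) =
      u.foldl (fun j a => ρ a j) i :: dualAct ρ δ (mealyMap ρ δ i u) s := by
  induction u generalizing i s with
  | nil => rfl
  | cons a u ih =>
    change dualAct ρ δ u (ρ a i :: mealyMap δ ρ (δ i a) s) = _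
    rw [ih]
    rfl

/-- The map `ρ_u` is the production function of the state `u` of the power automaton. -/
theorem dualAct_eq_mealyMap (u : List A) :
    dualAct ρ δ u =
      mealyMap (fun i w => mealyMap ρ δ i w) (fun w i => w.foldl (fun j a => ρ a j) i) u := by
  funext s
  induction s generalizing u with
  | nil => rw [dualAct_nil]; rfl
  | cons i s ih => rw [dualAct_swap_cons, ih]; rfl

theorem dualAct_cons (s : List S) (a : A) (w : List A) :
    dualAct δ ρ s (a :: w) =
      s.foldl (fun b i => δ i b) a :: dualAct δ ρ (mealyMap δ ρ a s) w :=
  dualAct_swap_cons ρ δ s a w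

/-- `δ_s(uw) = δ_s(u) δ_t(w)` with `t = ρ_u(s)`. -/
theorem dualAct_append_right (s : List S) (u w : List A) :
    dualAct δ ρ s (u ++ w) = dualAct δ ρ s u ++ dualAct δ ρ (dualAct ρ δ u s) w := by
  induction u generalizing s with
  | nil => rw [dualAct_nil]; rfl
  | cons a u ih => rw [List.cons_append, dualAct_cons, ih, dualAct_cons]; rfl

theorem exists_dualAct_singleton (s : List S) (u : List A) (a : A) :
    ∃ b, dualAct δ ρ s (u ++ [a]) = dualAct δ ρ s u ++ [b] := by
  rw [dualAct_append_right, dualAct_cons, dualAct_nil]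
  exact ⟨_, rfl⟩

/-- Morphisms of Mealy automata preserve production functions. It is used to replace a power
automaton by the part reachable from a state, and that part by a copy inside a finite type. -/
theorem mealyMap_hom {Q T : Type*} (δ₁ : S → Q → Q) (ρ₁ : Q → S → S) (δ₂ : S → T → T)
    (ρ₂ : T → S → S) (h : Q → T) (hδ : ∀ i q, δ₂ i (h q) = h (δ₁ i q))
    (hρ : ∀ q i, ρ₂ (h q) i = ρ₁ q i) (q : Q) : mealyMap δ₂ ρ₂ (h q) = mealyMap δ₁ ρ₁ q := by
  funext s
  induction s generalizing q with
  | nil => rfl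
  | cons i s ih => simp only [mealyMap, hδ, hρ, ih]

/-- The set of words `δ_s(u)`, `s ∈ Σ*`. For `M` reversible it is the connected component of `u`
in its power. -/
def orbitSet (u : List A) : Set (List A) := Set.range fun s => dualAct δ ρ s u

/-- If all the sets `orbitSet δ ρ u` embed in one finite type `T`, then every `ρ_u` is computed by a Mealy
automaton with stateset `T`, and there are finitely many of these. -/
theorem finite_range_of_orbit_embeds [Finite S] {T : Type*} [Finite T]
    (h : ∀ u : List A, ∃ f : orbitSet δ ρ u → T, Function.Injective f) :
    (Set.range (dualAct ρ δ)).Finite := by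
  have hfin : (Set.range fun p : (S → T → T) × (T → S → S) × T =>
      mealyMap p.1 p.2.1 p.2.2).Finite := Set.finite_range _
  refine hfin.subset ?_
  rintro _ ⟨u, rfl⟩
  obtain ⟨f, hf⟩ := h u
  have hu : u ∈ orbitSet δ ρ u := ⟨[], rfl⟩
  have : Nonempty (orbitSet δ ρ u) := ⟨⟨u, hu⟩⟩
  let next : S → orbitSet δ ρ u → orbitSet δ ρ u := fun i v =>
    ⟨mealyMap ρ δ i v.1, by
      obtain ⟨s, hs⟩ := v.2
      refine ⟨s ++ [i], ?_⟩
      simp only at hs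
      simp only [dualAct_append, hs]
      rfl⟩
  let out : orbitSet δ ρ u → S → S := fun v i => v.1.foldl (fun j a => ρ a j) i
  have hinv : ∀ v, Function.invFun f (f v) = v := Function.leftInverse_invFun hf
  refine ⟨(fun i t => f (next i (Function.invFun f t)), fun t i => out (Function.invFun f t) i,
    f ⟨u, hu⟩), ?_⟩
  dsimp only
  rw [mealyMap_hom next out _ _ f (fun i q => by simp only [hinv])
    (fun q i => by simp only [hinv]), dualAct_eq_mealyMap]
  exact (mealyMap_hom next out _ _ Subtype.val (fun _ _ => rfl) (fun _ _ => rfl) ⟨u, hu⟩).symm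

theorem finite_range_dual [Finite A] (h : (Set.range (dualAct ρ δ)).Finite) :
    (Set.range (dualAct δ ρ)).Finite := by
  have : Finite (Set.range (dualAct ρ δ)) := h
  refine finite_range_of_orbit_embeds ρ δ (T := Set.range (dualAct ρ δ)) fun s => ?_
  -- a point of the orbit of `s` is recovered from any map sending `s` to it
  refine ⟨fun v => ⟨dualAct ρ δ v.2.choose, _, rfl⟩, fun v w hvw => Subtype.ext ?_⟩
  rw [← v.2.choose_spec, ← w.2.choose_spec]
  exact congrFun (congrArg Subtype.val hvw) s

/-- The semigroup differs from the set of all `ρ_u` at most by the identity, which is `ρ_u` for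
the empty word `u`. -/
theorem finite_mealySemigroup_iff :
    Finite (mealySemigroup δ ρ) ↔ (Set.range (dualAct ρ δ)).Finite := by
  have key : ∀ (u : List A) (a : A),
      (dualAct ρ δ (a :: u) : Function.End (List S)) ∈ mealySemigroup δ ρ := by
    intro u
    induction u with
    | nil => exact fun a => Subsemigroup.subset_closure ⟨a, rfl⟩
    | cons b u ih =>
      exact fun a => (mealySemigroup δ ρ).mul_mem (ih b) (Subsemigroup.subset_closure ⟨a, rfl⟩)
  constructor
  · intro h
    have h' : ((mealySemigroup δ ρ : Set (Function.End (List S)))).Finite := h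
    refine (h'.insert (1 : Function.End (List S))).subset ?_
    rintro _ ⟨u, rfl⟩
    cases u with
    | nil => exact Or.inl rfl
    | cons a u => exact Or.inr (key u a)
  · intro h
    refine Set.Finite.subset (s := Set.range (dualAct ρ δ)) h ?_
    intro f hf
    refine Subsemigroup.closure_induction (M := Function.End (List S))
      (p := fun f _ => f ∈ Set.range (dualAct ρ δ)) ?_ ?_ hf
    · rintro _ ⟨a, rfl⟩
      exact ⟨[a], rfl⟩
    · rintro _ _ _ _ ⟨u, rfl⟩ ⟨v, rfl⟩
      exact ⟨v ++ u, funext fun s => dualAct_append ρ δ v u s⟩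

end Basic

/-! ### Components of the powers of a reversible automaton -/

section Reversible

variable {A S : Type*} {δ : S → A → A} {ρ : A → S → S}

theorem mealyMap_dual_injective (hrev : ∀ i, Function.Injective (δ i)) (i : S) :
    Function.Injective (mealyMap ρ δ i) := by
  intro u
  induction u generalizing i with
  | nil =>
    intro v h
    have := congrArg List.length h
    simp only [length_mealyMap] at this
    exact (List.length_eq_zero_iff.1 this.symm).symm
  | cons a u ih =>
    intro v h
    cases v with
    | nil => simp [mealyMap] at h
    | cons b v =>
      simp only [mealyMap, List.cons.injEq] at h
      obtain rfl := hrev i h.1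
      rw [ih _ h.2]

theorem dualAct_injective (hrev : ∀ i, Function.Injective (δ i)) (s : List S) :
    Function.Injective (dualAct δ ρ s) := by
  induction s with
  | nil => exact fun _ _ h => h
  | cons i s ih => exact fun u v h => mealyMap_dual_injective hrev i (ih h)

theorem sameComp_trans {u v w : List A} (h : sameComp δ ρ u v) (h' : sameComp δ ρ v w) :
    sameComp δ ρ u w := by
  obtain ⟨s, rfl⟩ := h
  obtain ⟨t, rfl⟩ := h'
  exact ⟨s ++ t, dualAct_append δ ρ s t u⟩

theorem sameComp_iterate (s : List S) (u : List A) (k : ℕ) :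
    sameComp δ ρ u ((dualAct δ ρ s)^[k] u) := by
  induction k with
  | zero => exact ⟨[], rfl⟩
  | succ k ih =>
    rw [Function.iterate_succ_apply']
    exact sameComp_trans ih ⟨s, rfl⟩

/-- `δ_s` permutes the finite set of words of a given length, so its inverse there is one of its
iterates. -/
theorem sameComp_symm [Finite A] (hrev : ∀ i, Function.Injective (δ i)) {u v : List A}
    (h : sameComp δ ρ u v) : sameComp δ ρ v u := by
  obtain ⟨s, rfl⟩ := h
  let f : List.Vector A u.length → List.Vector A u.length := fun w =>
    ⟨dualAct δ ρ s w.1, (length_dualAct δ ρ s w.1).trans w.2⟩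
  have hf : Function.Injective f := fun a b hab =>
    Subtype.ext (dualAct_injective hrev s (congrArg Subtype.val hab))
  have : Finite (List.Vector A u.length) := by
    have := Fintype.ofFinite A
    infer_instance
  obtain ⟨k, hk, hper⟩ := hf.mem_periodicPts ⟨u, rfl⟩
  obtain ⟨k, rfl⟩ := Nat.exists_eq_succ_of_ne_zero hk.ne'
  have hit : ∀ (m : ℕ) (w : List.Vector A u.length),
      (f^[m] w).1 = (dualAct δ ρ s)^[m] w.1 := by
    intro m
    induction m with
    | zero => exact fun _ => rfl
    | succ m ih => exact fun w => ih (f w)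
  have h1 : (dualAct δ ρ s)^[k + 1] u = u :=
    (hit (k + 1) ⟨u, rfl⟩).symm.trans (congrArg Subtype.val hper)
  rw [Function.iterate_succ_apply] at h1
  have h2 := sameComp_iterate (δ := δ) (ρ := ρ) s (dualAct δ ρ s u) k
  rwa [h1] at h2

/-- The relation `ux ~ uy` passes to suffixes of `u`. -/
theorem sameComp_suffix {v w : List A} {x y : A}
    (h : sameComp δ ρ ((v ++ w) ++ [x]) ((v ++ w) ++ [y])) :
    sameComp δ ρ (w ++ [x]) (w ++ [y]) := by
  obtain ⟨s, hs⟩ := h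
  refine ⟨dualAct ρ δ v s, ?_⟩
  rw [List.append_assoc, List.append_assoc, dualAct_append_right] at hs
  exact (List.append_inj hs (length_dualAct δ ρ s v)).2

/-- If every length `n` has a word `u` with `ux ~ uy`, then all powers are connected. -/
theorem sameComp_of_pumping [Finite A] (hrev : ∀ i, Function.Injective (δ i)) {x y : A}
    (hA : ∀ z, z = x ∨ z = y)
    (h : ∀ n, ∃ u : List A, u.length = n ∧ sameComp δ ρ (u ++ [x]) (u ++ [y]))
    (n : ℕ) : ∀ u v : List A, u.length = n → v.length = n → sameComp δ ρ u v := by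
  induction n with
  | zero =>
    intro u v hu hv
    rw [List.length_eq_zero_iff] at hu hv
    subst hu hv
    exact ⟨[], rfl⟩
  | succ n ih =>
    obtain ⟨u₀, hu₀, hxy⟩ := h n
    -- every word is in the component of `u₀x`
    have main : ∀ u : List A, u.length = n + 1 → sameComp δ ρ u (u₀ ++ [x]) := by
      intro u hu
      obtain ⟨w, a, rfl⟩ : ∃ w a, u = w ++ [a] :=
        ⟨_, _, (List.dropLast_append_getLast (by rintro rfl; simp at hu)).symm⟩
      obtain ⟨s, hs⟩ := ih w u₀ (by simpa using hu) hu₀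
      obtain ⟨b, hb⟩ := exists_dualAct_singleton δ ρ s w a
      rw [hs] at hb
      rcases hA b with rfl | rfl
      · exact ⟨s, hb⟩
      · exact sameComp_trans ⟨s, hb⟩ (sameComp_symm hrev hxy)
    exact fun u v hu hv => sameComp_trans (main u hu) (sameComp_symm hrev (main v hv))

/-- Without pumping beyond length `N`, a word is determined in its component by its first `N`
letters. -/
theorem eq_of_take_eq [Finite A] (hrev : ∀ i, Function.Injective (δ i)) {x y : A}
    (hA : ∀ z, z = x ∨ z = y) {N : ℕ}
    (h : ∀ u : List A, N ≤ u.length → ¬ sameComp δ ρ (u ++ [x]) (u ++ [y]))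
    (s : List S) (v : List A) (hv : (dualAct δ ρ s v).take N = v.take N) :
    dualAct δ ρ s v = v := by
  induction v using List.reverseRecOn with
  | nil => exact dualAct_nil δ ρ s
  | append_singleton w a ih =>
    obtain ⟨b, hb⟩ := exists_dualAct_singleton δ ρ s w a
    have hlen := length_dualAct δ ρ s w
    by_cases hN : N ≤ w.length
    · rw [hb, List.take_append_of_le_length hN, List.take_append_of_le_length (by omega)] at hv
      rw [ih hv] at hb
      have hab : sameComp δ ρ (w ++ [a]) (w ++ [b]) := ⟨s, hb⟩
      rcases hA a with rfl | rfl <;> rcases hA b with rfl | rfl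
      · exact hb
      · exact absurd hab (h w hN)
      · exact absurd (sameComp_symm hrev hab) (h w hN)
      · exact hb
    · rwa [List.take_of_length_le (by simp [length_dualAct]; omega),
        List.take_of_length_le (by simp; omega)] at hv

end Reversible

/-! ### The two-state case -/

/-- Pumping Lemma: a reversible Mealy automaton with exactly two states
`x` and `y` generates an infinite semigroup iff for every `N` there is a word `u` of length
at least `N` such that the states `ux` and `uy` lie in the same connected component of
`M^(|u|+1)` (i.e. some `δ_s` maps one to the other). -/
theorem pumping_lemma_two_state_reversible
    {A S : Type*} [Fintype A] [Fintype S] [Nonempty S]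
    (δ : S → A → A) (ρ : A → S → S)
    (hrev : ∀ i : S, Function.Bijective (δ i))
    (x y : A) (hxy : x ≠ y) (hA : ∀ z : A, z = x ∨ z = y) :
    Infinite ↥(mealySemigroup δ ρ) ↔
      ∀ N : ℕ, ∃ u : List A, N ≤ u.length ∧
        ∃ s : List S, dualAct δ ρ s (u ++ [x]) = u ++ [y] := by
  have hinj : ∀ i, Function.Injective (δ i) := fun i => (hrev i).1
  rw [← not_finite_iff_infinite, finite_mealySemigroup_iff]
  constructor
  · intro hinf
    by_contra! hno
    obtain ⟨N, hN⟩ := hno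
    have hN' : ∀ u : List A, N ≤ u.length → ¬ sameComp δ ρ (u ++ [x]) (u ++ [y]) :=
      fun u hu ⟨s, hs⟩ => hN u hu s hs
    have : Finite {l : List A | l.length ≤ N} := (List.finite_length_le A N).to_subtype
    refine hinf (finite_range_of_orbit_embeds δ ρ (T := {l : List A | l.length ≤ N}) fun u => ?_)
    refine ⟨fun v => ⟨v.1.take N, List.length_take_le N v.1⟩, ?_⟩
    rintro ⟨v, hv⟩ ⟨w, hw⟩ hvw
    obtain ⟨s, rfl⟩ : sameComp δ ρ v w := sameComp_trans (sameComp_symm hinj hv) hw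
    have htake : v.take N = (dualAct δ ρ s v).take N := congrArg Subtype.val hvw
    exact Subtype.ext (eq_of_take_eq hinj hA hN' s v htake.symm).symm
  · intro hpump hfin
    have hfin' := finite_range_dual δ ρ hfin
    have hall : ∀ n, ∃ u : List A, u.length = n ∧ sameComp δ ρ (u ++ [x]) (u ++ [y]) := by
      intro n
      obtain ⟨u, hu, hs⟩ := hpump n
      refine ⟨u.drop (u.length - n), by simp; omega, ?_⟩
      apply sameComp_suffix (v := u.take (u.length - n))
      rw [List.take_append_drop]
      exact hs
    have htrans := sameComp_of_pumping hinj hA hall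
    -- with `n` the number of maps `δ_s`: an orbit has at most `n` points, yet some orbit is all
    -- of `Aⁿ`, which has more than `n`
    set n := (Set.range (dualAct δ ρ)).ncard with hn
    have hsub : Set.range (Subtype.val : List.Vector A n → List A) ⊆
        (fun f => f (List.replicate n x)) '' Set.range (dualAct δ ρ) := by
      rintro _ ⟨v, rfl⟩
      obtain ⟨s, hs⟩ := htrans n (List.replicate n x) v.1 (by simp) v.2
      exact ⟨_, ⟨s, rfl⟩, hs⟩
    have h1 := (Set.ncard_le_ncard hsub (hfin'.image _)).trans (Set.ncard_image_le hfin')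
    have hcard : (Set.range (Subtype.val : List.Vector A n → List A)).ncard =
        Fintype.card A ^ n := by
      rw [← Set.image_univ, Set.ncard_image_of_injective _ Subtype.val_injective, Set.ncard_univ]
      exact (Nat.card_eq_fintype_card (α := List.Vector A n)).trans (card_vector n)
    rw [hcard, ← hn] at h1
    have h2 : 1 < Fintype.card A := Fintype.one_lt_card_iff.2 ⟨x, y, hxy⟩
    exact absurd h1 (not_le.2 (Nat.lt_pow_self h2))
end
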